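/- arXiv:2511.12327 — 2 statements merged into one kernel-verified Lean document; each statement's English description precedes it below -/
import Mathlib

section
/- Let X ⊆ ℝ be such that (X[≤])² is a pseudo-normal topological space. If there exists a strictly decreasing bijection f : X → X that is a homeomorphism of X with respect to the Euclidean subspace topology, then X is a λ-set. -/
/-- The Sorgenfrey (lower limit) topology on `ℝ`, generated by half-open
intervals `[a, b)` with `a < b`. -/
def sorgenfrey : TopologicalSpace ℝ :=
  TopologicalSpace.generateFrom {s : Set ℝ | ∃ a b : ℝ, a < b ∧ s = Set.Ico a b}

/-- The Sorgenfrey subspace topology on a set of reals `X`, i.e. `X[≤]`. -/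
def sorgenfreySub (X : Set ℝ) : TopologicalSpace X :=
  sorgenfrey.induced Subtype.val

/-- The product topology `(X[≤])²` on `X × X`. -/
def sorgenfreySq (X : Set ℝ) : TopologicalSpace (X × X) :=
  @instTopologicalSpaceProd X X (sorgenfreySub X) (sorgenfreySub X)

/-- A set of reals `X` is a λ-set if every countable subset of `X` is a
relative `Gδ`-set in `X` with respect to the Euclidean subspace topology. -/
def IsLambdaSet (X : Set ℝ) : Prop :=
  ∀ A : Set ℝ, A ⊆ X → A.Countable → IsGδ (Subtype.val ⁻¹' A : Set X)

/-- A topological space is pseudo-normal if any two disjoint closed sets, one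
of which is countable, can be separated by disjoint open sets. -/
def PseudoNormalSpace (Z : Type*) [TopologicalSpace Z] : Prop :=
  ∀ A B : Set Z, IsClosed A → IsClosed B → A.Countable → Disjoint A B →
    ∃ U V : Set Z, IsOpen U ∧ IsOpen V ∧ A ⊆ U ∧ B ⊆ V ∧ Disjoint U V

/-! The graph of a strictly decreasing continuous map meets the upper set of each of its points only
in that point, so every subset of the graph is closed in the Sorgenfrey product. For a countable `A`
the graphs over `A` and over its complement can therefore be separated by Sorgenfrey-open sets `U`
and `V`. A Baire-type argument turns this into a Euclidean separation: split `V` into countably many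
pieces on which the basic Sorgenfrey neighbourhoods have a uniform size. If points `w` of one piece
converged to `z ∈ U`, then `z ⊔ w` would eventually lie in both `U` and `V`. Hence the closures of
the pieces miss `U`, and their complements intersect in a `Gδ` set containing `U` and missing `V`,
whose preimage under `x ↦ (x, f x)` is `A`. -/

open Filter Metric Set Topology

instance instContinuousSupProd {X Y : Type*} [TopologicalSpace X] [TopologicalSpace Y] [Max X]
    [Max Y] [ContinuousSup X] [ContinuousSup Y] : ContinuousSup (X × Y) where
  continuous_sup := by
    change Continuous fun p : (X × Y) × X × Y => (p.1.1 ⊔ p.2.1, p.1.2 ⊔ p.2.2)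
    fun_prop

section LowerLimitOpen

/-- Openness in the lower limit refinement of the topology of a preordered space: the basic
neighbourhoods of `z` are the traces on `Ici z` of its neighbourhoods. On a set of reals, and on a
product of two of them with the componentwise order, this is Sorgenfrey openness. -/
def IsLowerLimitOpen {Z : Type*} [TopologicalSpace Z] [Preorder Z] (W : Set Z) : Prop :=
  ∀ z ∈ W, W ∈ 𝓝[≥] z

theorem isLowerLimitOpen_compl_graphOn {X Y : Type*} [TopologicalSpace X] [PartialOrder X]
    [TopologicalSpace Y] [T2Space Y] [Preorder Y] {f : X → Y} (hf : Continuous f)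
    (hanti : StrictAnti f) (A : Set X) : IsLowerLimitOpen (A.graphOn f)ᶜ := by
  rintro ⟨p, q⟩ hpq
  by_cases hq : f p = q
  · subst hq
    refine mem_of_superset self_mem_nhdsWithin ?_
    rintro ⟨x, y⟩ ⟨hpx : p ≤ x, hpy : f p ≤ y⟩ hxy
    obtain ⟨hxA : x ∈ A, rfl : f x = y⟩ := mem_graphOn.1 hxy
    obtain rfl : p = x := hpx.eq_of_not_lt fun hlt => (hanti hlt).not_ge hpy
    exact hpq (mem_graphOn.2 ⟨hxA, rfl⟩)
  · have off_graph : ∀ᶠ z : X × Y in 𝓝 (p, q), f z.1 ≠ z.2 :=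
      (isOpen_ne_fun (hf.comp continuous_fst) continuous_snd).mem_nhds hq
    filter_upwards [nhdsWithin_le_nhds off_graph] with z hz hzA
    exact hz (mem_graphOn.1 hzA).2

variable {Z : Type*} [PseudoMetricSpace Z]

/-- The points of `Z` whose basic lower limit neighbourhood of radius `δ` lies in `V`; these are the
pieces of uniform size into which a lower limit open set is split. -/
def lowerLimitCore [Preorder Z] (V : Set Z) (δ : ℝ) : Set Z :=
  {w | ball w δ ∩ Ici w ⊆ V}

theorem IsLowerLimitOpen.exists_mem_lowerLimitCore [Preorder Z] {V : Set Z}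
    (hV : IsLowerLimitOpen V) {z : Z} (hz : z ∈ V) :
    ∃ n : ℕ, z ∈ lowerLimitCore V (1 / (n + 1)) := by
  obtain ⟨ε, hε, hball⟩ := mem_nhdsWithin_iff.1 (hV z hz)
  obtain ⟨n, hn⟩ := exists_nat_one_div_lt hε
  exact ⟨n, (inter_subset_inter_left _ (ball_subset_ball hn.le)).trans hball⟩

variable [SemilatticeSup Z] [ContinuousSup Z] {U V : Set Z}

theorem IsLowerLimitOpen.disjoint_closure_lowerLimitCore (hU : IsLowerLimitOpen U)
    (hUV : Disjoint U V) {δ : ℝ} (hδ : 0 < δ) :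
    Disjoint U (closure (lowerLimitCore V δ)) := by
  refine disjoint_left.2 fun z hzU hzcl => ?_
  have sup_tendsto : Tendsto (fun w => z ⊔ w) (𝓝 z) (𝓝 z) := by
    simpa only [sup_idem, id] using
      (tendsto_const_nhds (x := z)).sup_nhds (tendsto_id (x := 𝓝 z))
  have sup_mem_U : ∀ᶠ w in 𝓝 z, z ⊔ w ∈ U :=
    tendsto_nhdsWithin_iff.2 ⟨sup_tendsto, .of_forall fun _ => le_sup_left⟩ (hU z hzU)
  have sup_near : ∀ᶠ w in 𝓝 z, dist (z ⊔ w) w < δ := by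
    have h := sup_tendsto.dist tendsto_id
    rw [dist_self] at h
    exact h.eventually_lt_const hδ
  obtain ⟨w, hwV, hwU, hwδ⟩ :=
    ((mem_closure_iff_frequently.1 hzcl).and_eventually (sup_mem_U.and sup_near)).exists
  exact disjoint_left.1 hUV hwU (hwV ⟨hwδ, le_sup_right⟩)

theorem IsLowerLimitOpen.exists_isGδ_separating (hU : IsLowerLimitOpen U)
    (hV : IsLowerLimitOpen V) (hUV : Disjoint U V) :
    ∃ G : Set Z, IsGδ G ∧ U ⊆ G ∧ Disjoint G V := by
  refine ⟨⋂ n : ℕ, (closure (lowerLimitCore V (1 / (n + 1))))ᶜ,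
    .iInter fun _ => isClosed_closure.isOpen_compl.isGδ,
    subset_iInter fun _ => (hU.disjoint_closure_lowerLimitCore hUV
      Nat.one_div_pos_of_nat).subset_compl_right,
    disjoint_right.2 fun z hzV hzG => ?_⟩
  obtain ⟨n, hn⟩ := hV.exists_mem_lowerLimitCore hzV
  exact mem_iInter.1 hzG n (subset_closure hn)

end LowerLimitOpen

section Sorgenfrey

theorem nhds_sorgenfrey (x : ℝ) : @nhds ℝ sorgenfrey x = 𝓝[≥] x := by
  rw [sorgenfrey, TopologicalSpace.nhds_generateFrom]
  apply le_antisymm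
  · refine (nhdsGE_basis x).ge_iff.2 fun b hb => ?_
    exact mem_iInf_of_mem (Ico x b) (mem_iInf_of_mem ⟨left_mem_Ico.2 hb, x, b, hb, rfl⟩
      (mem_principal_self _))
  · refine le_iInf₂ ?_
    rintro _ ⟨hx, a, b, -, rfl⟩
    exact le_principal_iff.2 (Ico_mem_nhdsGE_of_mem hx)

theorem nhds_sorgenfreySub {X : Set ℝ} (x : X) : @nhds X (sorgenfreySub X) x = 𝓝[≥] x := by
  rw [sorgenfreySub, @nhds_induced _ _ sorgenfrey, nhds_sorgenfrey, nhdsWithin, nhdsWithin,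
    comap_inf, comap_principal, nhds_subtype_eq_comap]
  rfl

/-- The topology of `X[≤] × Y[≤]`; the case `Y = X` is `sorgenfreySq X`. -/
abbrev sorgenfreyProd (X Y : Set ℝ) : TopologicalSpace (X × Y) :=
  @instTopologicalSpaceProd X Y (sorgenfreySub X) (sorgenfreySub Y)

variable {X Y : Set ℝ}

theorem isOpen_sorgenfreyProd_iff {W : Set (X × Y)} :
    IsOpen[sorgenfreyProd X Y] W ↔ IsLowerLimitOpen W := by
  rw [@isOpen_iff_mem_nhds _ (sorgenfreyProd X Y)]
  refine forall₂_congr fun ⟨p, q⟩ _ => ?_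
  rw [@nhds_prod_eq X Y (sorgenfreySub X) (sorgenfreySub Y), nhds_sorgenfreySub,
    nhds_sorgenfreySub, ← nhdsWithin_prod_eq, Ici_prod_Ici]

theorem isClosed_graphOn_sorgenfreyProd {f : X → Y} (hf : Continuous f) (hanti : StrictAnti f)
    (A : Set X) : IsClosed[sorgenfreyProd X Y] (A.graphOn f) :=
  @IsClosed.mk _ (_) _ (isOpen_sorgenfreyProd_iff.2 (isLowerLimitOpen_compl_graphOn hf hanti A))

theorem stmt15_general (hpn : @PseudoNormalSpace (X × Y) (sorgenfreyProd X Y))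
    {f : X → Y} (hf : Continuous f) (hanti : StrictAnti f) : IsLambdaSet X := by
  intro A _ hA
  set B : Set X := Subtype.val ⁻¹' A
  have graph_countable : (B.graphOn f).Countable :=
    (hA.preimage Subtype.val_injective).image _
  have graph_disjoint : Disjoint (B.graphOn f) (Bᶜ.graphOn f) :=
    disjoint_left.2 fun _ h h' => (mem_graphOn.1 h').1 (mem_graphOn.1 h).1
  obtain ⟨U, V, hU, hV, hBU, hBV, hUV⟩ := hpn _ _
    (isClosed_graphOn_sorgenfreyProd hf hanti B)
    (isClosed_graphOn_sorgenfreyProd hf hanti Bᶜ) graph_countable graph_disjoint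
  obtain ⟨G, hG, hUG, hGV⟩ := (isOpen_sorgenfreyProd_iff.1 hU).exists_isGδ_separating
    (isOpen_sorgenfreyProd_iff.1 hV) hUV
  have hBG : B = (fun x => (x, f x)) ⁻¹' G := by
    refine Subset.antisymm (fun x hx => hUG (hBU (mem_image_of_mem _ hx))) fun x hxG => ?_
    by_contra hx
    exact disjoint_left.1 hGV hxG (hBV (mem_image_of_mem _ hx))
  rw [hBG]
  exact hG.preimage (continuous_id.prodMk hf)

end Sorgenfrey

/-- If `(X[≤])²` is pseudo-normal and there is a strictly
decreasing bijection `f : X → X` which is a homeomorphism for the Euclidean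
subspace topology, then `X` is a λ-set. -/
theorem stmt15 (X : Set ℝ)
    (hpn : @PseudoNormalSpace (X × X) (sorgenfreySq X))
    (f : X ≃ₜ X)
    (hf : ∀ x y : X, (x : ℝ) < (y : ℝ) → (f y : ℝ) < (f x : ℝ)) :
    IsLambdaSet X :=
  stmt15_general hpn f.continuous fun _ _ => hf _ _
end

section
/- Let X ⊆ ℝ and let A, B ⊆ X × X be disjoint sets that are closed in (X[≤])². Then the set A \ cl_E(B), where cl_E(B) denotes the closure of B in X × X with respect to the Euclidean subspace topology, has the covering property with respect to B in (X[≤])². -/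
/-- `A` has the covering property with respect to `B`: there is a countable
family of open sets covering `A` whose closures are disjoint from `B`. -/
def CoveringProperty {Z : Type*} [TopologicalSpace Z] (A B : Set Z) : Prop :=
  ∃ U : ℕ → Set Z, (∀ n, IsOpen (U n)) ∧ A ⊆ ⋃ n, U n ∧
    ∀ n, closure (U n) ∩ B = ∅

open scoped Topology

theorem isOpen_sorgenfrey_Ico (a b : ℝ) : IsOpen[sorgenfrey] (Set.Ico a b) := by
  rcases lt_or_ge a b with hab | hba
  · exact TopologicalSpace.isOpen_generateFrom_of_mem ⟨a, b, hab, rfl⟩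
  · rw [Set.Ico_eq_empty_of_le hba]
    exact @isOpen_empty ℝ sorgenfrey

theorem sorgenfrey_le : sorgenfrey ≤ (inferInstance : TopologicalSpace ℝ) := by
  intro U hU
  refine (@isOpen_iff_forall_mem_open ℝ sorgenfrey U).2 fun x hx => ?_
  obtain ⟨b, hxb, hbU⟩ := exists_Ico_subset_of_mem_nhds (hU.mem_nhds hx) (exists_gt x)
  exact ⟨Set.Ico x b, hbU, isOpen_sorgenfrey_Ico x b, Set.left_mem_Ico.2 hxb⟩

theorem sorgenfreySub_le (X : Set ℝ) :
    sorgenfreySub X ≤ (inferInstance : TopologicalSpace X) :=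
  induced_mono sorgenfrey_le

theorem sorgenfreySq_le (X : Set ℝ) :
    sorgenfreySq X ≤ (inferInstance : TopologicalSpace (X × X)) :=
  inf_le_inf (induced_mono (sorgenfreySub_le X)) (induced_mono (sorgenfreySub_le X))

section CoveringProperty

variable {Z : Type*}

theorem coveringProperty_iff_hasSeparatingCover [TopologicalSpace Z] {A B : Set Z} :
    CoveringProperty A B ↔ HasSeparatingCover A B := by
  simp only [CoveringProperty, HasSeparatingCover, Set.disjoint_iff_inter_eq_empty, forall_and,
    and_left_comm]

theorem CoveringProperty.mono_left [TopologicalSpace Z] {A₁ A₂ B : Set Z}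
    (h : CoveringProperty A₂ B) (hA : A₁ ⊆ A₂) : CoveringProperty A₁ B := by
  obtain ⟨U, hUo, hUA, hUB⟩ := h
  exact ⟨U, hUo, hA.trans hUA, hUB⟩

theorem CoveringProperty.of_topology_le {s t : TopologicalSpace Z} {A B : Set Z} (hst : s ≤ t)
    (h : @CoveringProperty Z t A B) : @CoveringProperty Z s A B := by
  obtain ⟨U, hUo, hUA, hUB⟩ := h
  exact ⟨U, fun n => hst _ (hUo n), hUA, fun n =>
    Set.subset_eq_empty (Set.inter_subset_inter_left B (closure.mono hst)) (hUB n)⟩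

theorem coveringProperty_compl_closure [TopologicalSpace Z] [PerfectlyNormalSpace Z] (B : Set Z) :
    CoveringProperty (closure B)ᶜ B := by
  have hcover : HasSeparatingCover (closure B)ᶜ (closure B) :=
    disjoint_compl_left.hasSeparatingCover_closed_gdelta_right isClosed_closure
      isClosed_closure.isGδ
  exact coveringProperty_iff_hasSeparatingCover.2 (hcover.mono subset_rfl subset_closure)

theorem stmt18_general {s t : TopologicalSpace Z} [@PerfectlyNormalSpace Z t] (hst : s ≤ t)
    (A B : Set Z) : @CoveringProperty Z s (A \ closure[t] B) B :=
  have hcompl : @CoveringProperty Z s (closure[t] B)ᶜ B :=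
    .of_topology_le hst (@coveringProperty_compl_closure Z t _ B)
  @CoveringProperty.mono_left Z s _ _ _ hcompl fun _ hz => hz.2

end CoveringProperty

/-- If `A, B ⊆ X × X` are disjoint and closed in `(X[≤])²`, then
`A \ cl_E(B)` (Euclidean subspace closure in `X × X`) has the covering property
with respect to `B` in `(X[≤])²`. -/
theorem stmt18 (X : Set ℝ) (A B : Set (X × X))
    (hA : @IsClosed _ (sorgenfreySq X) A)
    (hB : @IsClosed _ (sorgenfreySq X) B)
    (hAB : Disjoint A B) :
    @CoveringProperty _ (sorgenfreySq X) (A \ closure B) B :=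
  stmt18_general (sorgenfreySq_le X) A B
end
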